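/- Let u : X → ℝ be an upper semicontinuous function. Then u is continuous on X and S-subharmonic on X if and only if there exists a sequence (u_j) of functions in S that increases pointwise to u on X. -/

import Mathlib

/-!
If `u_j ∈ S` increases to `u`, then `u` is lower semicontinuous as a supremum of continuous
functions, hence continuous, and `u_j z ≤ ∫ u_j dμ ≤ ∫ u dμ` passes to the limit.

Conversely, the core is a form of Edwards' duality theorem (`exists_minorant_at_point`): a
continuous `u` with `u z ≤ ∫ u dμ` for all Jensen measures `μ` at `z` satisfies
`u z = sup {v z : v ∈ S, v ≤ u}`. Indeed, otherwise for some `ε > 0` the function `u - (u z - ε)` lies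
outside the open convex cone `strictCone S z`, the set of continuous functions lying uniformly above some
`v ∈ S` with `v z ≥ 0`. A functional separating the two is, up to sign and normalisation, a Jensen
measure at `z` by the Riesz–Markov–Kakutani theorem, and it violates the inequality for `u`.

By compactness and stability under maxima, the pointwise minorants can be glued to minorants in `S`
that are uniformly `ε`-close to `u` (`exists_uniform_minorant`), and the running maxima of such
minorants for `ε = 1 / (j + 1)` increase to `u`.
-/

open MeasureTheory Topology Filter
open scoped ENNReal

/-- The nonnegative part of an extended real number, as an element of `ℝ≥0∞`. -/
noncomputable def erealToENNReal (a : EReal) : ℝ≥0∞ :=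
  if a = ⊤ then ⊤ else ENNReal.ofReal a.toReal

/-- The (upper) integral of a function with values in `[-∞, ∞]`, defined as the
difference of the lower integrals of its positive and negative parts. -/
noncomputable def erealIntegral {α : Type*} [MeasurableSpace α]
    (μ : Measure α) (u : α → EReal) : EReal :=
  ((∫⁻ x, erealToENNReal (u x) ∂μ : ℝ≥0∞) : EReal) -
    ((∫⁻ x, erealToENNReal (-(u x)) ∂μ : ℝ≥0∞) : EReal)

/-- `μ` is a Jensen measure with barycenter `z` with respect to the family `S` of
(continuous real-valued) functions: a Borel probability measure such that
`u z ≤ ∫ u dμ` for every `u ∈ S`. -/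
def IsJensenMeasure {α : Type*} [MeasurableSpace α]
    (S : Set (α → ℝ)) (z : α) (μ : Measure α) : Prop :=
  IsProbabilityMeasure μ ∧ ∀ u ∈ S, u z ≤ ∫ x, u x ∂μ

/-- A function `u : α → [-∞, ∞)` is `S`-subharmonic if it is upper semicontinuous
and satisfies `u z ≤ ∫ u dμ` for every `z` and every Jensen measure `μ` with
barycenter `z` w.r.t. `S`. -/
def IsSSubharmonic {α : Type*} [TopologicalSpace α] [MeasurableSpace α]
    (S : Set (α → ℝ)) (u : α → EReal) : Prop :=
  UpperSemicontinuous u ∧ (∀ x, u x ≠ ⊤) ∧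
    ∀ z : α, ∀ μ : Measure α, IsJensenMeasure S z μ → u z ≤ erealIntegral μ u

/-- For real-valued integrable functions, `erealIntegral` is the Bochner integral. -/
lemma erealIntegral_coe {α : Type*} [MeasurableSpace α] (μ : Measure α) (u : α → ℝ)
    (hu : Integrable u μ) :
    erealIntegral μ (fun x => ((u x : ℝ) : EReal)) = ((∫ x, u x ∂μ : ℝ) : EReal) := by
  have h1 : ∀ r : ℝ, erealToENNReal (r : EReal) = ENNReal.ofReal r := fun r => by
    simp [erealToENNReal]
  have h2 : ∀ v : α → ℝ, Integrable v μ → ∫⁻ x, ENNReal.ofReal (v x) ∂μ ≠ ⊤ := fun v hv =>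
    ((lintegral_mono fun x => Real.ofReal_le_enorm (v x)).trans_lt hv.2).ne
  rw [integral_eq_lintegral_pos_part_sub_lintegral_neg_part hu, EReal.coe_sub,
    EReal.coe_ennreal_toReal (h2 u hu), EReal.coe_ennreal_toReal (h2 (fun x => -u x) hu.neg)]
  simp only [erealIntegral, ← EReal.coe_neg, h1]

/-- A normalised positive functional on `C(α, ℝ)`, with `α` compact Hausdorff, is integration
against a probability measure. -/
lemma exists_probabilityMeasure_of_positive {α : Type*} [TopologicalSpace α] [CompactSpace α]
    [T2Space α] [MeasurableSpace α] [BorelSpace α] (L : C(α, ℝ) →ₗ[ℝ] ℝ)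
    (hpos : ∀ f : C(α, ℝ), 0 ≤ f → 0 ≤ L f) (h1 : L 1 = 1) :
    ∃ μ : Measure α, IsProbabilityMeasure μ ∧ ∀ f : C(α, ℝ), ∫ x, f x ∂μ = L f := by
  let Λ : CompactlySupportedContinuousMap α ℝ →ₚ[ℝ] ℝ := PositiveLinearMap.mk₀
    { toFun := fun f => L f.toContinuousMap
      map_add' := fun f g => L.map_add f.toContinuousMap g.toContinuousMap
      map_smul' := fun c f => L.map_smul c f.toContinuousMap }
    (fun f hf => hpos f.toContinuousMap hf)
  have key : ∀ f : C(α, ℝ), ∫ x, f x ∂(RealRMK.rieszMeasure Λ) = L f := fun f =>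
    RealRMK.integral_rieszMeasure Λ (CompactlySupportedContinuousMap.continuousMapEquiv f)
  refine ⟨RealRMK.rieszMeasure Λ, ⟨?_⟩, key⟩
  have h := key 1
  simp only [ContinuousMap.one_apply, integral_const, smul_eq_mul, mul_one, h1] at h
  exact (ENNReal.toReal_eq_one_iff _).1 h

/-- The continuous functions lying uniformly above some `v ∈ S` with `v z ≥ 0`. -/
def strictCone {α : Type*} [TopologicalSpace α] (S : Set (α → ℝ)) (z : α) : Set C(α, ℝ) :=
  {f | ∃ v ∈ S, 0 ≤ v z ∧ ∃ δ : ℝ, 0 < δ ∧ ∀ x, v x + δ ≤ f x}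

lemma isOpen_strictCone {α : Type*} [TopologicalSpace α] [CompactSpace α]
    (S : Set (α → ℝ)) (z : α) : IsOpen (strictCone S z) := by
  rw [Metric.isOpen_iff]
  rintro f ⟨v, hv, hz, δ, hδ, h⟩
  refine ⟨δ / 2, by positivity, fun g hg => ⟨v, hv, hz, δ / 2, by positivity, fun x => ?_⟩⟩
  have h1 := (ContinuousMap.dist_apply_le_dist (f := g) (g := f) x).trans_lt (Metric.mem_ball.1 hg)
  rw [Real.dist_eq, abs_lt] at h1
  linarith [h x, h1.1]

lemma convex_strictCone {α : Type*} [TopologicalSpace α] {S : Set (α → ℝ)} (z : α)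
    (hadd : ∀ u ∈ S, ∀ v ∈ S, u + v ∈ S)
    (hsmul : ∀ u ∈ S, ∀ t : ℝ, 0 ≤ t → t • u ∈ S) : Convex ℝ (strictCone S z) := by
  rintro f ⟨v, hv, hz, δ, hδ, h⟩ g ⟨w, hw, hz', δ', hδ', h'⟩ a b ha hb hab
  refine ⟨a • v + b • w, hadd _ (hsmul _ hv _ ha) _ (hsmul _ hw _ hb), ?_, min δ δ',
    lt_min hδ hδ', fun x => ?_⟩
  · simp only [Pi.add_apply, Pi.smul_apply, smul_eq_mul]
    positivity
  · simp only [Pi.add_apply, Pi.smul_apply, smul_eq_mul, ContinuousMap.add_apply,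
      ContinuousMap.smul_apply]
    have h1 := mul_le_mul_of_nonneg_left
      ((add_le_add_right (min_le_left δ δ') (v x)).trans (h x)) ha
    have h2 := mul_le_mul_of_nonneg_left
      ((add_le_add_right (min_le_right δ δ') (w x)).trans (h' x)) hb
    have h3 : min δ δ' = a * min δ δ' + b * min δ δ' := by rw [← add_mul, hab, one_mul]
    linarith

/-- Edwards' duality at a single point: if `u z ≤ ∫ u dμ` for all Jensen measures `μ` at `z`,
then minorants of `u` in `S` come arbitrarily close to `u` at `z`. -/
lemma exists_minorant_at_point {α : Type*} [TopologicalSpace α] [CompactSpace α]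
    [T2Space α] [MeasurableSpace α] [BorelSpace α] {S : Set (α → ℝ)}
    (hS : ∀ f ∈ S, Continuous f)
    (hconst : ∀ c : ℝ, (fun _ => c) ∈ S)
    (hadd : ∀ u ∈ S, ∀ v ∈ S, u + v ∈ S)
    (hsmul : ∀ u ∈ S, ∀ t : ℝ, 0 ≤ t → t • u ∈ S)
    (u : C(α, ℝ)) (z : α)
    (hu : ∀ μ : Measure α, IsJensenMeasure S z μ → u z ≤ ∫ x, u x ∂μ) {ε : ℝ} (hε : 0 < ε) :
    ∃ v ∈ S, (∀ x, v x ≤ u x) ∧ u z - ε ≤ v z := by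
  by_contra hcon
  let c : ℝ := u z - ε
  have hnot : u - ContinuousMap.const α c ∉ strictCone S z := by
    rintro ⟨v, hv, hz, δ, hδ, h⟩
    refine hcon ⟨v + fun _ => c, hadd _ hv _ (hconst c), fun x => ?_, ?_⟩
    · have := h x
      simp only [ContinuousMap.sub_apply, ContinuousMap.const_apply] at this
      simp only [Pi.add_apply]
      linarith
    · simp only [Pi.add_apply, c]
      linarith
  obtain ⟨F, hF⟩ := geometric_hahn_banach_open_point (convex_strictCone z hadd hsmul)
    (isOpen_strictCone S z) hnot
  -- The cone is stable under positive scaling, so a functional bounded above on it is `≤ 0` there.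
  have hsc : ∀ f ∈ strictCone S z, ∀ t : ℝ, 0 < t → t • f ∈ strictCone S z := by
    rintro f ⟨v, hv, hz, δ, hδ, h⟩ t ht
    refine ⟨t • v, hsmul _ hv _ ht.le, mul_nonneg ht.le hz, t * δ, by positivity, fun x => ?_⟩
    simp only [Pi.smul_apply, smul_eq_mul, ContinuousMap.smul_apply]
    rw [← mul_add]
    exact mul_le_mul_of_nonneg_left (h x) ht.le
  have hneg : ∀ f ∈ strictCone S z, F f ≤ 0 := by
    intro f hf
    by_contra! hpos
    have hb := hF _ (hsc f hf ((|F (u - ContinuousMap.const α c)| + 1) / F f) (by positivity))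
    rw [map_smul, smul_eq_mul, div_mul_cancel₀ _ hpos.ne'] at hb
    linarith [le_abs_self (F (u - ContinuousMap.const α c))]
  have h1mem : (1 : C(α, ℝ)) ∈ strictCone S z :=
    ⟨fun _ => 0, hconst 0, le_rfl, 1, one_pos, fun x => by simp⟩
  have hx0 : 0 ≤ F (u - ContinuousMap.const α c) := by
    by_contra! hlt
    have h2 := hneg 1 h1mem
    have hb := hF _ (hsc 1 h1mem (F (u - ContinuousMap.const α c) / (2 * (F 1 - 1)))
      (div_pos_of_neg_of_neg hlt (by linarith)))
    rw [map_smul, smul_eq_mul, div_mul_eq_mul_div, div_lt_iff_of_neg (by linarith)] at hb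
    nlinarith
  -- A function is a limit of elements of the cone as soon as it dominates some `v ∈ S`, `v z ≥ 0`.
  have hweak : ∀ f : C(α, ℝ), (∃ v ∈ S, 0 ≤ v z ∧ ∀ x, v x ≤ f x) → F f ≤ 0 := by
    rintro f ⟨v, hv, hz, h⟩
    have hlim : Tendsto (fun t : ℝ => F f + t * F 1) (𝓝[>] 0) (𝓝 (F f + 0 * F 1)) :=
      (Continuous.tendsto (by fun_prop) 0).mono_left nhdsWithin_le_nhds
    rw [zero_mul, add_zero] at hlim
    refine le_of_tendsto hlim ?_
    filter_upwards [self_mem_nhdsWithin] with t ht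
    have := hneg (f + t • 1) ⟨v, hv, hz, t, ht, fun x => by simpa using h x⟩
    simpa using this
  have hposF : ∀ f : C(α, ℝ), 0 ≤ f → F f ≤ 0 := fun f hf =>
    hweak f ⟨fun _ => 0, hconst 0, le_rfl, hf⟩
  -- Put `g = u - c`. If `F 1 = 0`, then `‖g‖ + g ≥ 0` gives `F g ≤ 0 = F 1`, whereas the separation
  -- is strict: `F 1 < F g`.
  have hF1 : F 1 < 0 := by
    refine lt_of_le_of_ne (hneg 1 h1mem) fun h0 => ?_
    have hb := hF 1 h1mem
    have := hposF (‖u - ContinuousMap.const α c‖ • 1 + (u - ContinuousMap.const α c))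
      (fun x => by
        have := (abs_le.1 ((u - ContinuousMap.const α c).norm_coe_le_norm x)).1
        simp at this ⊢
        linarith)
    rw [map_add, map_smul, h0, smul_zero] at this
    linarith
  let L : C(α, ℝ) →ₗ[ℝ] ℝ := (F 1)⁻¹ • (F : C(α, ℝ) →ₗ[ℝ] ℝ)
  have hLw : ∀ f, F f ≤ 0 → 0 ≤ L f := fun f hf =>
    mul_nonneg_of_nonpos_of_nonpos (inv_nonpos.2 hF1.le) hf
  have hL1 : L 1 = 1 := inv_mul_cancel₀ hF1.ne
  have hLc : ∀ a : ℝ, L (ContinuousMap.const α a) = a := fun a => by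
    have : ContinuousMap.const α a = a • 1 := by ext; simp
    rw [this, map_smul, hL1, smul_eq_mul, mul_one]
  obtain ⟨μ, hμ, hint⟩ := exists_probabilityMeasure_of_positive L
    (fun f hf => hLw f (hposF f hf)) hL1
  have hJ : IsJensenMeasure S z μ := by
    refine ⟨hμ, fun v hv => ?_⟩
    have h := hLw (⟨v, hS v hv⟩ - ContinuousMap.const α (v z)) (hweak _
      ⟨v + fun _ => -v z, hadd _ hv _ (hconst _), by simp, fun x => by simp [sub_eq_add_neg]⟩)
    rw [map_sub, hLc, ← hint] at h
    exact sub_nonneg.1 h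
  have h1 := hu μ hJ
  have h2 : L (u - ContinuousMap.const α c) ≤ 0 :=
    mul_nonpos_of_nonpos_of_nonneg (inv_nonpos.2 hF1.le) hx0
  rw [map_sub, hLc, ← hint] at h2
  simp only [c] at h2
  linarith

/-- Minorants that are good at single points are glued by maxima and compactness. -/
lemma exists_uniform_minorant {α : Type*} [TopologicalSpace α] [CompactSpace α]
    {S : Set (α → ℝ)} (hS : ∀ f ∈ S, Continuous f)
    (hconst : ∀ c : ℝ, (fun _ => c) ∈ S)
    (hmax : ∀ u ∈ S, ∀ v ∈ S, (fun x => max (u x) (v x)) ∈ S)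
    (u : C(α, ℝ))
    (hu : ∀ z, ∀ ε : ℝ, 0 < ε → ∃ v ∈ S, (∀ x, v x ≤ u x) ∧ u z - ε ≤ v z)
    {ε : ℝ} (hε : 0 < ε) :
    ∃ v ∈ S, (∀ x, v x ≤ u x) ∧ ∀ x, u x - ε ≤ v x := by
  have key : ∃ v ∈ S, (∀ x, v x ≤ u x) ∧ ∀ x ∈ (Set.univ : Set α), u x - ε ≤ v x := by
    refine isCompact_univ.induction_on
      (p := fun s => ∃ v ∈ S, (∀ x, v x ≤ u x) ∧ ∀ x ∈ s, u x - ε ≤ v x) ?_ ?_ ?_ ?_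
    · refine ⟨fun _ => -‖u‖, hconst _, fun x => ?_, by simp⟩
      exact (abs_le.1 (u.norm_coe_le_norm x)).1
    · rintro s t hst ⟨v, hv, h1, h2⟩
      exact ⟨v, hv, h1, fun x hx => h2 x (hst hx)⟩
    · rintro s t ⟨v, hv, h1, h2⟩ ⟨w, hw, h3, h4⟩
      refine ⟨_, hmax v hv w hw, fun x => max_le (h1 x) (h3 x), ?_⟩
      rintro x (hx | hx)
      · exact (h2 x hx).trans (le_max_left _ _)
      · exact (h4 x hx).trans (le_max_right _ _)
    · intro z _
      obtain ⟨v, hv, h1, h2⟩ := hu z (ε / 2) (by positivity)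
      have hc : Continuous fun x => u x - v x := u.continuous.sub (hS v hv)
      refine ⟨{x | u x - v x < ε}, mem_nhdsWithin_of_mem_nhds
        ((isOpen_lt hc continuous_const).mem_nhds ?_), v, hv, h1, fun x hx => ?_⟩
      · change u z - v z < ε
        linarith
      · have : u x - v x < ε := hx
        linarith
  obtain ⟨v, hv, h1, h2⟩ := key
  exact ⟨v, hv, h1, fun x => h2 x trivial⟩

/-- An upper semicontinuous `u : X → ℝ` is continuous and `S`-subharmonic on `X`
if and only if it is the pointwise increasing limit of a sequence of functions in `S`. -/
theorem continuous_subharmonic_iff_increasing_approx {n : ℕ}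
    (X : Set (Fin n → ℂ)) (hX : IsCompact X)
    (S : Set (↥X → ℝ)) (hS : ∀ f ∈ S, Continuous f)
    (hconst : ∀ c : ℝ, (fun _ => c) ∈ S)
    (hadd : ∀ u ∈ S, ∀ v ∈ S, u + v ∈ S)
    (hsmul : ∀ u ∈ S, ∀ t : ℝ, 0 ≤ t → t • u ∈ S)
    (hmax : ∀ u ∈ S, ∀ v ∈ S, (fun x => max (u x) (v x)) ∈ S)
    (u : ↥X → ℝ) (hu : UpperSemicontinuous u) :
    (Continuous u ∧ IsSSubharmonic S (fun x => ((u x : ℝ) : EReal))) ↔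
      ∃ uj : ℕ → ↥X → ℝ, (∀ j, uj j ∈ S) ∧
        (∀ x, Monotone fun j => uj j x) ∧
        (∀ x, Tendsto (fun j => uj j x) atTop (𝓝 (u x))) := by
  have : CompactSpace ↥X := isCompact_iff_compactSpace.1 hX
  constructor
  · rintro ⟨hc, -, -, hsub⟩
    have hpt : ∀ z, ∀ ε : ℝ, 0 < ε → ∃ v ∈ S, (∀ x, v x ≤ u x) ∧ u z - ε ≤ v z := by
      intro z ε hε
      refine exists_minorant_at_point hS hconst hadd hsmul ⟨u, hc⟩ z (fun μ hμ => ?_) hε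
      have := hμ.1
      have h := hsub z μ hμ
      rw [erealIntegral_coe μ u (hc.integrable_of_hasCompactSupport
        (HasCompactSupport.of_compactSpace u))] at h
      exact EReal.coe_le_coe_iff.1 h
    have huni : ∀ j : ℕ, ∃ v ∈ S, (∀ x, v x ≤ u x) ∧ ∀ x, u x - 1 / ((j : ℝ) + 1) ≤ v x :=
      fun j => exists_uniform_minorant hS hconst hmax ⟨u, hc⟩ hpt (by positivity)
    choose v hv hle hge using huni
    refine ⟨partialSups v, fun j => ?_, fun x i j hij => (partialSups v).monotone hij x,
      fun x => ?_⟩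
    · induction j with
      | zero => simpa using hv 0
      | succ j ih =>
        rw [← Order.succ_eq_add_one, partialSups_succ]
        exact hmax _ ih _ (hv _)
    · have hlim : Tendsto (fun j : ℕ => u x - 1 / ((j : ℝ) + 1)) atTop (𝓝 (u x)) := by
        simpa using tendsto_const_nhds.sub (tendsto_one_div_add_atTop_nhds_zero_nat (𝕜 := ℝ))
      refine tendsto_of_tendsto_of_tendsto_of_le_of_le hlim tendsto_const_nhds
        (fun j => (hge j x).trans (le_partialSups v j x)) (fun j => ?_)
      exact partialSups_le v j u (fun i _ => hle i) x
  · rintro ⟨v, hv, hmono, hlim⟩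
    have hle : ∀ j x, v j x ≤ u x := fun j x => (hmono x).ge_of_tendsto (hlim x) j
    have hc : Continuous u := by
      refine continuous_iff_lower_upperSemicontinuous.2 ⟨fun x y hy => ?_, hu⟩
      obtain ⟨j, hj⟩ := ((hlim x).eventually (lt_mem_nhds hy)).exists
      filter_upwards [(hS _ (hv j)).continuousAt.eventually (lt_mem_nhds hj)] with x' hx'
      exact hx'.trans_le (hle j x')
    have hint : ∀ (μ : Measure ↥X) [IsProbabilityMeasure μ] (f : ↥X → ℝ), Continuous f →
        Integrable f μ := fun μ _ f hf =>
      hf.integrable_of_hasCompactSupport (HasCompactSupport.of_compactSpace f)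
    refine ⟨hc, (continuous_coe_real_ereal.comp hc).upperSemicontinuous,
      fun x => EReal.coe_ne_top _, fun z μ hμ => ?_⟩
    have := hμ.1
    rw [erealIntegral_coe μ u (hint μ u hc), EReal.coe_le_coe_iff]
    exact le_of_tendsto' (hlim z) fun j => (hμ.2 _ (hv j)).trans
      (integral_mono (hint μ _ (hS _ (hv j))) (hint μ u hc) (hle j))
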